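/- arXiv:2303.04085 — 6 statements merged into one kernel-verified Lean document; each statement's English description precedes it below -/
import Mathlib

section
/- Let G be a finite group and let X⃗ = Cay⃗(G;S) be a Cayley digraph of G that is not a DCI digraph. Let n ≥ 3, and set k = 2 if n > 3 and k = 3 if n = 3. Assume: (i) nk ≠ |G|; (ii) either n > 3 or |S ∪ {1_G}| ≤ |G|/3; and (iii) either X⃗ is not isomorphic to X⃗⁻ (the digraph obtained from X⃗ by reversing all directed edges), or there is a group automorphism α of G with α(S) = S⁻¹. Then G × (Z_n)² is not a CI group. -/
/-! The obstruction to the DCI property is moved from `G` to `G × A`, where `A = (ℤ_n)²` has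
standard generators `a`, `b`.

Let `S'` be such that `Cay⃗(G;S) ≅ Cay⃗(G;S')` via `e` while no automorphism carries `S` to `S'`.
Put `U = S ∪ {1}` and `U' = S' ∪ {1}`; then `e` is still an isomorphism, no automorphism carries
`U` to `U'`, and `2 ≤ |U| = |U'|`. The set `liftSet a b U ⊆ G × A` has the slice `G` over `1`, `U`
over `a`, `U⁻¹` over `a⁻¹`, the slice `{1}` over `b`, `b⁻¹`, `ab`, `(ab)⁻¹`, and is empty
elsewhere. It is symmetric, and `e × id` is an isomorphism between the Cayley graphs of
`liftSet a b U` and `liftSet a b U'`.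

Suppose an automorphism `α` of `G × A` carries `liftSet a b U` to `liftSet a b U'`.

* `α` maps `G × 1` into itself (`snd_eq_one_of_sq`, `snd_eq_one_of_three`). Indeed `α(G × 1)` is a
  subgroup contained in `liftSet a b U'`, so its projection to `A` is a subgroup contained in
  the support of the slices. For `n > 3` the support contains no nontrivial subgroup. For `n = 3`
  such a subgroup has order at most `3`, and counting with `3|U| ≤ |G|` leaves only the case
  where `α(G × 1)` is `U' × ⟨a⟩`. In that case every coset of `α(G × 1)` meeting `liftSet a b U'`
  meets it at least twice, whereas the coset of `G × 1` over `b` meets `liftSet a b U` once.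
* Hence `α` permutes slices (`image_of_fiber`). Slices with one element go to slices with one
  element, which forces `α(1,b)` and `α(1,ab)`, hence also `α(1,a)`, to have first coordinate `1`.
  So the automorphism of `G` induced by `α` carries `U` to `U'` or to `U'⁻¹`.

The first outcome is excluded. The second makes `Cay⃗(G;S)` isomorphic to its reverse, so by
hypothesis some automorphism carries `S` to `S⁻¹`, which brings back the first outcome. -/

/-- Edge relation of the Cayley digraph `Cay⃗(G;S)`: there is a directed edge from
`g` to `h` iff `h ∈ Sg`, i.e. iff `h * g⁻¹ ∈ S`. -/
def cayleyRel {G : Type*} [Group G] (S : Set G) : G → G → Prop :=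
  fun g h => h * g⁻¹ ∈ S

/-- Isomorphism of digraphs (or of undirected graphs, viewed via their symmetric
edge relations): a bijection of the vertex sets such that there is an edge from `x`
to `y` iff there is one from the image of `x` to the image of `y`. -/
def DigraphIso {V W : Type*} (r : V → V → Prop) (s : W → W → Prop) : Prop :=
  ∃ e : V ≃ W, ∀ x y, r x y ↔ s (e x) (e y)

/-- `Cay⃗(G;S)` is a DCI digraph: for every `S' ⊆ G` with `Cay⃗(G;S) ≅ Cay⃗(G;S')`
there is a group automorphism of `G` carrying `S` to `S'`. -/
def IsDCIDigraph {G : Type*} [Group G] (S : Set G) : Prop :=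
  ∀ S' : Set G, DigraphIso (cayleyRel S) (cayleyRel S') → ∃ α : G ≃* G, α '' S = S'

/-- `G` is a DCI group: every Cayley digraph of `G` is a DCI digraph. -/
def IsDCIGroup (G : Type*) [Group G] : Prop :=
  ∀ S : Set G, IsDCIDigraph S

/-- `G` is a CI group: for all symmetric `S, S' ⊆ G` with `Cay(G;S) ≅ Cay(G;S')`,
some group automorphism of `G` carries `S` to `S'`. -/
def IsCIGroup (G : Type*) [Group G] : Prop :=
  ∀ S S' : Set G, S = S⁻¹ → S' = S'⁻¹ →
    DigraphIso (cayleyRel S) (cayleyRel S') → ∃ α : G ≃* G, α '' S = S'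

/-! ### Lifting connection sets from `G` to `G × A` -/

section Lift

variable {G A : Type*} [Group G] [CommGroup A]

/-- The elements of `A` over which the lifted connection set has the slice `{1}`. -/
def unitSlices (a b : A) : Set A := {b, b⁻¹, a * b, (a * b)⁻¹}

/-- The elements of `A` over which the lifted connection set has a nonempty slice. -/
def slices (a b : A) : Set A := {x | x = 1 ∨ x = a ∨ x = a⁻¹ ∨ x ∈ unitSlices a b}

/-- The lift of a subset `U` of `G` to `G × A`: its slice is `G` over `1`, `U` over `a`, `U⁻¹` over
`a⁻¹`, `{1}` over `unitSlices a b`, and empty elsewhere. -/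
def liftSet (a b : A) (U : Set G) : Set (G × A) :=
  {p | p.2 = 1 ∨ (p.2 = a ∧ p.1 ∈ U) ∨ (p.2 = a⁻¹ ∧ p.1⁻¹ ∈ U) ∨ (p.2 ∈ unitSlices a b ∧ p.1 = 1)}

/-- The elements `1`, `a`, `a⁻¹` are distinct and lie outside `unitSlices a b`, so that the slices
of `liftSet a b U` are the intended ones. -/
structure GoodPair (a b : A) : Prop where
  a_ne_one : a ≠ 1
  a_ne_inv : a ≠ a⁻¹
  one_notMem : (1 : A) ∉ unitSlices a b
  a_notMem : a ∉ unitSlices a b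

lemma unitSlices_inv {a b x : A} : x⁻¹ ∈ unitSlices a b ↔ x ∈ unitSlices a b := by
  simp only [unitSlices, Set.mem_insert_iff, Set.mem_singleton_iff, inv_eq_iff_eq_inv, inv_inv]
  tauto

lemma GoodPair.inv_notMem {a b : A} (h : GoodPair a b) : a⁻¹ ∉ unitSlices a b := by
  rw [unitSlices_inv]; exact h.a_notMem

lemma mem_slices_of_mem_liftSet {a b : A} {U : Set G} {p : G × A} (h : p ∈ liftSet a b U) :
    p.2 ∈ slices a b := by
  simp only [liftSet, slices, Set.mem_ofPred_eq] at *
  tauto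

lemma mem_liftSet_one {a b : A} {U : Set G} {g : G} : (g, (1 : A)) ∈ liftSet a b U := Or.inl rfl

lemma mem_liftSet_a {a b : A} (h : GoodPair a b) {U : Set G} {g : G} :
    (g, a) ∈ liftSet a b U ↔ g ∈ U := by
  simp [liftSet, h.a_ne_one, h.a_ne_inv, h.a_notMem]

lemma mem_liftSet_inv {a b : A} (h : GoodPair a b) {U : Set G} {g : G} :
    (g, a⁻¹) ∈ liftSet a b U ↔ g⁻¹ ∈ U := by
  simp [liftSet, h.a_ne_one, h.a_ne_inv.symm, h.inv_notMem]

lemma mem_liftSet_unit {a b : A} (h : GoodPair a b) {U : Set G} {g : G} {x : A}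
    (hx : x ∈ unitSlices a b) : (g, x) ∈ liftSet a b U ↔ g = 1 := by
  have h1 : x ≠ 1 := by rintro rfl; exact h.one_notMem hx
  have h2 : x ≠ a := by rintro rfl; exact h.a_notMem hx
  have h3 : x ≠ a⁻¹ := by rintro rfl; exact h.inv_notMem hx
  simp [liftSet, h1, h2, h3, hx]

lemma liftSet_symm (a b : A) (U : Set G) : liftSet a b U = (liftSet a b U)⁻¹ := by
  ext ⟨g, x⟩
  simp only [liftSet, Set.mem_inv, Set.mem_ofPred_eq, Prod.fst_inv, Prod.snd_inv, inv_inv,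
    unitSlices_inv, inv_eq_iff_eq_inv, inv_one]
  tauto

lemma liftSet_iso (a b : A) {U U' : Set G} (h : DigraphIso (cayleyRel U) (cayleyRel U')) :
    DigraphIso (cayleyRel (liftSet a b U)) (cayleyRel (liftSet a b U')) := by
  obtain ⟨e, he⟩ := h
  refine ⟨e.prodCongr (Equiv.refl A), ?_⟩
  rintro ⟨g, x⟩ ⟨h, y⟩
  have h1 := he g h
  have h2 := he h g
  simp only [cayleyRel] at h1 h2
  simp [cayleyRel, liftSet, h1, h2, mul_inv_eq_one]

/-- An automorphism of `G × A` that preserves `G × 1` and carries one lifted set to another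
induces an automorphism of `G` carrying `U` to `U'` or to `U'⁻¹`. -/
lemma image_of_fiber [Finite G] {a b : A} (hab : GoodPair a b) {U U' : Set G}
    (h1 : 1 ∈ U) (h1' : 1 ∈ U') (hcard : U.ncard = U'.ncard) (h2 : 1 < U.ncard)
    (α : G × A ≃* G × A) (hα : ∀ p, α p ∈ liftSet a b U' ↔ p ∈ liftSet a b U)
    (hfib : ∀ g : G, (α (g, 1)).2 = 1) :
    ∃ β : G ≃* G, β '' U = U' ∨ β '' U = U'⁻¹ := by
  obtain ⟨u, hu, hu1⟩ := Set.exists_ne_of_one_lt_ncard h2 1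
  let ψ : G →* G := (MonoidHom.fst G A).comp (α.toMonoidHom.comp (MonoidHom.inl G A))
  have hψ : ∀ g, α (g, 1) = (ψ g, 1) := fun g => Prod.ext rfl (hfib g)
  have hinj : Function.Injective ψ := by
    intro g g' hgg
    have : α (g, 1) = α (g', 1) := by rw [hψ, hψ, hgg]
    simpa using α.injective this
  have hbij : Function.Bijective ψ := Finite.injective_iff_bijective.mp hinj
  let β : G ≃* G := MulEquiv.ofBijective ψ hbij
  -- One-element slices go to one-element slices, and every nonempty slice contains the identity.
  have key : ∀ x ∈ unitSlices a b, (α (1, x)).1 = 1 := by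
    intro x hx
    have hy : α (1, x) ∈ liftSet a b U' := (hα _).2 ((mem_liftSet_unit hab hx).2 rfl)
    have uniq : ∀ g', (g', (α (1, x)).2) ∈ liftSet a b U' → g' = (α (1, x)).1 := by
      intro g' hg'
      obtain ⟨g, hg⟩ := hbij.2 (g' * (α (1, x)).1⁻¹)
      have e1 : α (g, x) = (g', (α (1, x)).2) := by
        have : ((g, x) : G × A) = (g, 1) * (1, x) := by simp
        rw [this, map_mul, hψ, hg]
        ext <;> simp
      rw [← e1, hα, mem_liftSet_unit hab hx] at hg'
      subst hg'
      rw [e1]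
    rcases hp : α (1, x) with ⟨g, y⟩
    rw [hp] at hy uniq
    simp only at uniq ⊢
    rcases hy with h | ⟨h, -⟩ | ⟨h, -⟩ | ⟨-, h⟩
    · simp only at h
      subst h
      exact (uniq 1 mem_liftSet_one).symm
    · simp only at h
      subst h
      exact (uniq 1 ((mem_liftSet_a hab).2 h1')).symm
    · simp only at h
      subst h
      exact (uniq 1 ((mem_liftSet_inv hab).2 (by simpa using h1'))).symm
    · exact h
  have ka : (α (1, a)).1 = 1 := by
    have e1 : ((1, a) : G × A) = (1, a * b) * (1, b)⁻¹ := by simp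
    rw [e1, map_mul, map_inv, Prod.fst_mul, Prod.fst_inv, key b (by simp [unitSlices]),
      key (a * b) (by simp [unitSlices])]
    simp
  rcases hp : α (1, a) with ⟨g, z⟩
  rw [hp] at ka
  simp only at ka
  subst ka
  have hga : ∀ g, α (g, a) = (ψ g, z) := by
    intro g
    have : ((g, a) : G × A) = (g, 1) * (1, a) := by simp
    rw [this, map_mul, hψ, hp]
    simp
  have hz : ∀ v ∈ U, (ψ v, z) ∈ liftSet a b U' := fun v hv => by
    rw [← hga, hα]; exact (mem_liftSet_a hab).2 hv
  have hz1 : z ≠ 1 := by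
    rintro rfl
    have : α (1, a) = α 1 := by rw [hp, map_one]; rfl
    exact hab.a_ne_one (congrArg Prod.snd (α.injective this))
  refine ⟨β, ?_⟩
  have hc : (β '' U).ncard = U'.ncard := by
    rw [Set.ncard_image_of_injective _ β.injective, hcard]
  rcases mem_slices_of_mem_liftSet (hz 1 h1) with h | h | h | h
  · exact absurd h hz1
  · left
    refine Set.eq_of_subset_of_ncard_le ?_ hc.ge
    rintro _ ⟨v, hv, rfl⟩
    have := hz v hv
    simp only at h
    subst h
    exact (mem_liftSet_a hab).1 this
  · right
    refine Set.eq_of_subset_of_ncard_le ?_ ?_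
    · rintro _ ⟨v, hv, rfl⟩
      have := hz v hv
      simp only at h
      subst h
      exact (mem_liftSet_inv hab).1 this
    · rw [hc, ← Set.image_inv_eq_inv, Set.ncard_image_of_injective _ inv_injective]
  · exact absurd (hinj (((mem_liftSet_unit hab h).1 (hz u hu)).trans (map_one ψ).symm)) hu1

/-- If the support of the slices contains no square of a nontrivial element of the support, then
`G × 1` is preserved. -/
lemma snd_eq_one_of_sq {a b : A} {U U' : Set G}
    (hsq : ∀ x ∈ slices a b, x ≠ 1 → x * x ∉ slices a b)
    (α : G × A ≃* G × A) (hα : ∀ p, α p ∈ liftSet a b U' ↔ p ∈ liftSet a b U) (g : G) :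
    (α (g, 1)).2 = 1 := by
  by_contra h
  have hm : ∀ g, (α (g, 1)).2 ∈ slices a b := fun g =>
    mem_slices_of_mem_liftSet ((hα _).2 mem_liftSet_one)
  refine hsq _ (hm g) h ?_
  rw [← Prod.snd_mul, ← map_mul]
  simpa using hm (g * g)

/-- If every subgroup of `A` inside the support of the slices has the form `{1, x, x⁻¹}`, and
`3|U'| ≤ |G|`, then `G × 1` is preserved. -/
lemma snd_eq_one_of_three [Finite G] {a b : A} (hab : GoodPair a b) {U U' : Set G}
    (h1' : 1 ∈ U') (h2 : 1 < U'.ncard) (h3 : 3 * U'.ncard ≤ Nat.card G)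
    (hline : ∀ x ∈ slices a b, ∀ y ∈ slices a b, x ≠ 1 → x * y ∈ slices a b →
      x * y⁻¹ ∈ slices a b → y = 1 ∨ y = x ∨ y = x⁻¹)
    (α : G × A ≃* G × A) (hα : ∀ p, α p ∈ liftSet a b U' ↔ p ∈ liftSet a b U) (g : G) :
    (α (g, 1)).2 = 1 := by
  by_contra hg
  let φ : G →* A := (MonoidHom.snd G A).comp (α.toMonoidHom.comp (MonoidHom.inl G A))
  have hφ : ∀ g, (α (g, 1)).2 = φ g := fun _ => rfl
  have hinj : ∀ g g' : G, α (g, 1) = α (g', 1) → g = g' := fun g g' h => by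
    simpa using α.injective h
  have hm' : ∀ g, α (g, 1) ∈ liftSet a b U' := fun g => (hα _).2 mem_liftSet_one
  have hm : ∀ g, φ g ∈ slices a b := fun g => mem_slices_of_mem_liftSet (hm' g)
  have hrange : ∀ g', φ g' = 1 ∨ φ g' = φ g ∨ φ g' = (φ g)⁻¹ := fun g' =>
    hline _ (hm g) _ (hm g') hg (by rw [← map_mul]; exact hm _)
      (by rw [← map_inv, ← map_mul]; exact hm _)
  have hcard : Nat.card G ≤ 3 * Nat.card φ.ker := by
    rw [← φ.ker.card_mul_index, Subgroup.index_ker, mul_comm]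
    refine Nat.mul_le_mul_right _ ?_
    have hs : (φ.range : Set A) ⊆ {1, φ g, (φ g)⁻¹} := by
      rintro _ ⟨g', rfl⟩
      simpa using hrange g'
    calc Nat.card φ.range = (φ.range : Set A).ncard := (Nat.card_coe_set_eq _)
      _ ≤ ({1, φ g, (φ g)⁻¹} : Set A).ncard := Set.ncard_le_ncard hs
      _ ≤ 3 := (Set.ncard_insert_le _ _).trans (Nat.succ_le_succ
          ((Set.ncard_insert_le _ _).trans (by rw [Set.ncard_singleton])))
  by_cases hq : φ g ∈ unitSlices a b
  · have : φ.ker = ⊥ := by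
      rw [Subgroup.eq_bot_iff_forall]
      intro k hk
      have hk' : φ (k * g) = φ g := by rw [map_mul, MonoidHom.mem_ker.1 hk, one_mul]
      have e : ∀ g', φ g' ∈ unitSlices a b → α (g', 1) = (1, φ g') := fun g' h' =>
        Prod.ext ((mem_liftSet_unit hab h').1 (hm' g')) rfl
      have := hinj (k * g) g (by rw [e _ (hk' ▸ hq), e _ hq, hk'])
      simpa using this
    rw [this, Subgroup.card_bot] at hcard
    omega
  -- The projection of `α(G × 1)` to `A` is now `{1, a, a⁻¹}`.
  obtain ⟨t, ht⟩ : ∃ t, φ t = a := by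
    rcases hm g with h | h | h | h
    · exact absurd h hg
    · exact ⟨g, h⟩
    · exact ⟨g⁻¹, by rw [map_inv, h, inv_inv]⟩
    · exact absurd h hq
  -- The slice of `α(G × 1)` over `a` has at least `|G|/3` elements, so it is all of `U'`.
  have hU : ∀ u ∈ U', ∃ g', α (g', 1) = (u, a) := by
    let f : G → G := fun k => (α (k * t, 1)).1
    have hf : ∀ k ∈ φ.ker, α (k * t, 1) = (f k, a) := fun k hk =>
      Prod.ext rfl (by rw [hφ, map_mul, MonoidHom.mem_ker.1 hk, ht, one_mul])
    have himg : f '' (φ.ker : Set G) = U' := by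
      refine Set.eq_of_subset_of_ncard_le ?_ ?_
      · rintro _ ⟨k, hk, rfl⟩
        have := hm' (k * t)
        rw [hf k hk] at this
        exact (mem_liftSet_a hab).1 this
      · rw [Set.InjOn.ncard_image]
        · have : (φ.ker : Set G).ncard = Nat.card φ.ker := (Nat.card_coe_set_eq _).symm
          omega
        · intro k hk k' hk' h
          have := hinj (k * t) (k' * t) (by rw [hf k hk, hf k' hk', h])
          simpa using this
    intro u hu
    rw [← himg] at hu
    obtain ⟨k, hk, rfl⟩ := hu
    exact ⟨_, hf k hk⟩
  obtain ⟨s, hs⟩ := hU 1 h1'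
  -- The coset of `α(G × 1)` through `α(1, b)` meets the lifted set only once.
  have hb : b ∈ unitSlices a b := by simp [unitSlices]
  have hno : ∀ g', α (g', 1) * α (1, b) ∈ liftSet a b U' → g' = 1 := by
    intro g' h
    rw [← map_mul, hα] at h
    simp only [Prod.mk_mul_mk, mul_one, one_mul] at h
    exact (mem_liftSet_unit hab hb).1 h
  have hs1 : s ≠ 1 := by
    rintro rfl
    exact hab.a_ne_one (congrArg Prod.snd (hs.symm.trans (map_one α)))
  have hsi : α (s⁻¹, 1) = (1, a⁻¹) := by
    have : ((s⁻¹, 1) : G × A) = (s, 1)⁻¹ := by simp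
    rw [this, map_inv, hs]
    simp
  have hy : α (1, b) ∈ liftSet a b U' := (hα _).2 ((mem_liftSet_unit hab hb).2 rfl)
  -- No element of `α(G × 1)` equals `α(1, b)`.
  have hout : ∀ g', α (g', 1) ≠ α (1, b) := fun g' h => by
    have := congrArg Prod.snd (α.injective h)
    simp only at this
    exact hab.one_notMem (this ▸ hb)
  rcases hp : α (1, b) with ⟨h, y⟩
  rw [hp] at hno hy hout
  rcases hy with hc | ⟨hc, hh⟩ | ⟨hc, hh⟩ | ⟨hc, hh⟩
  · simp only at hc
    subst hc
    obtain ⟨u, hu, hu1⟩ := Set.exists_ne_of_one_lt_ncard h2 1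
    obtain ⟨g', hg'⟩ := hU u hu
    have e : α (g' * s⁻¹, 1) = (u, 1) := by
      have : ((g' * s⁻¹, 1) : G × A) = (g', 1) * (s⁻¹, 1) := by simp
      rw [this, map_mul, hg', hsi]
      simp
    have h1 := hno (g' * s⁻¹) (by rw [e]; exact Or.inl (by simp))
    rw [h1] at e
    exact hu1 (congrArg Prod.fst (e.symm.trans (map_one α)))
  · simp only at hc hh
    subst hc
    obtain ⟨g', hg'⟩ := hU h hh
    exact hout g' hg'
  · simp only at hc hh
    obtain ⟨g', hg'⟩ := hU _ hh
    refine hout g'⁻¹ ?_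
    have : ((g'⁻¹, 1) : G × A) = (g', 1)⁻¹ := by simp
    rw [this, map_inv, hg', hc]
    simp
  · simp only at hc hh
    subst hh
    have hneg : s⁻¹ ≠ 1 := by simpa using hs1
    rcases hc with hc | hc | hc | hc
    · refine hs1 (hno s ?_)
      rw [hs, hc, Prod.mk_mul_mk, mul_one]
      exact (mem_liftSet_unit hab (by simp [unitSlices])).2 rfl
    · refine hneg (hno _ ?_)
      rw [hsi, hc, Prod.mk_mul_mk, mul_one, ← mul_inv]
      exact (mem_liftSet_unit hab (by simp [unitSlices])).2 rfl
    · refine hneg (hno _ ?_)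
      rw [hsi, hc, Prod.mk_mul_mk, mul_one, inv_mul_cancel_left]
      exact (mem_liftSet_unit hab (by simp [unitSlices])).2 rfl
    · refine hs1 (hno s ?_)
      rw [hs, hc, Prod.mk_mul_mk, mul_one, mul_inv, mul_inv_cancel_left]
      exact (mem_liftSet_unit hab (by simp [unitSlices])).2 rfl

end Lift

/-! ### The generators of `(ℤ_n)²` -/

section Cyclic

/-- The first standard generator of `(ℤ_n)²`. -/
def genA (n : ℕ) : Multiplicative (ZMod n) × Multiplicative (ZMod n) :=
  (Multiplicative.ofAdd 1, Multiplicative.ofAdd 0)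

/-- The second standard generator of `(ℤ_n)²`. -/
def genB (n : ℕ) : Multiplicative (ZMod n) × Multiplicative (ZMod n) :=
  (Multiplicative.ofAdd 0, Multiplicative.ofAdd 1)

lemma mem_unitSlices_gen {n : ℕ} {u v : ZMod n} :
    ((Multiplicative.ofAdd u, Multiplicative.ofAdd v) :
      Multiplicative (ZMod n) × Multiplicative (ZMod n)) ∈ unitSlices (genA n) (genB n) ↔
      (u = 0 ∧ v = 1) ∨ (u = 0 ∧ v = -1) ∨ (u = 1 ∧ v = 1) ∨ (u = -1 ∧ v = -1) := by
  simp only [unitSlices, genA, genB, Set.mem_insert_iff, Set.mem_singleton_iff, Prod.mk_mul_mk,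
    Prod.inv_mk, ← ofAdd_add, ← ofAdd_neg, Prod.mk.injEq, EmbeddingLike.apply_eq_iff_eq, add_zero,
    zero_add, neg_zero]

lemma mem_slices_gen {n : ℕ} {u v : ZMod n} :
    ((Multiplicative.ofAdd u, Multiplicative.ofAdd v) :
      Multiplicative (ZMod n) × Multiplicative (ZMod n)) ∈ slices (genA n) (genB n) ↔
      (u = 0 ∧ v = 0) ∨ (u = 1 ∧ v = 0) ∨ (u = -1 ∧ v = 0) ∨
      (u = 0 ∧ v = 1) ∨ (u = 0 ∧ v = -1) ∨ (u = 1 ∧ v = 1) ∨ (u = -1 ∧ v = -1) := by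
  simp only [slices, Set.mem_ofPred_eq, mem_unitSlices_gen]
  simp only [genA, Prod.inv_mk, ← ofAdd_neg, Prod.mk.injEq, EmbeddingLike.apply_eq_iff_eq,
    neg_zero, Prod.mk_eq_one, ofAdd_eq_one]

lemma zmod_natCast_ne_zero {n m : ℕ} (h0 : 0 < m) (h : m < n) : (m : ZMod n) ≠ 0 := by
  rw [Ne, ZMod.natCast_eq_zero_iff]
  exact fun hd => absurd (Nat.le_of_dvd h0 hd) (by omega)

lemma goodPair_gen {n : ℕ} (hn : 3 ≤ n) : GoodPair (genA n) (genB n) := by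
  have h1 : (1 : ZMod n) ≠ 0 := by exact_mod_cast zmod_natCast_ne_zero (m := 1) (by omega) (by omega)
  have h2 : (2 : ZMod n) ≠ 0 := by exact_mod_cast zmod_natCast_ne_zero (m := 2) (by omega) (by omega)
  have h3 : (1 : ZMod n) ≠ -1 := fun h => h2 (by linear_combination h)
  refine ⟨?_, ?_, ?_, ?_⟩
  · simp [genA, h1]
  · simp [genA, ← ofAdd_neg, h3]
  · intro h
    have h0 : (0 : ZMod n) ≠ -1 := fun h => h1 (by linear_combination h)
    have := mem_unitSlices_gen.1 (show ((Multiplicative.ofAdd (0 : ZMod n),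
      Multiplicative.ofAdd (0 : ZMod n)) : Multiplicative (ZMod n) × Multiplicative (ZMod n)) ∈
      unitSlices (genA n) (genB n) from h)
    simp [h0, h1.symm] at this
  · intro h
    have := mem_unitSlices_gen.1 h
    simp [h1, h1.symm, h3] at this

lemma sq_notMem_slices_gen {n : ℕ} (hn : 3 < n) :
    ∀ x ∈ slices (genA n) (genB n), x ≠ 1 → x * x ∉ slices (genA n) (genB n) := by
  have h1 : (1 : ZMod n) ≠ 0 := by exact_mod_cast zmod_natCast_ne_zero (m := 1) (by omega) (by omega)
  have h2 : (2 : ZMod n) ≠ 0 := by exact_mod_cast zmod_natCast_ne_zero (m := 2) (by omega) (by omega)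
  have h3 : (3 : ZMod n) ≠ 0 := by exact_mod_cast zmod_natCast_ne_zero (m := 3) (by omega) (by omega)
  have aux : ∀ u : ZMod n, u = 1 ∨ u = -1 → u + u ≠ 0 ∧ u + u ≠ 1 ∧ u + u ≠ -1 := by
    rintro u (rfl | rfl)
    · exact ⟨fun h => h2 (by linear_combination h), fun h => h1 (by linear_combination h),
        fun h => h3 (by linear_combination h)⟩
    · exact ⟨fun h => h2 (by linear_combination -h), fun h => h3 (by linear_combination -h),
        fun h => h1 (by linear_combination -h)⟩
  rintro ⟨x, y⟩ hx hne hxx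
  obtain ⟨u, rfl⟩ := Multiplicative.ofAdd.surjective x
  obtain ⟨v, rfl⟩ := Multiplicative.ofAdd.surjective y
  rw [Prod.mk_mul_mk, ← ofAdd_add, ← ofAdd_add, mem_slices_gen] at hxx
  rw [mem_slices_gen] at hx
  have hne' : ¬ (u = 0 ∧ v = 0) := by
    rintro ⟨rfl, rfl⟩
    exact hne rfl
  have hu := aux u
  have hv := aux v
  tauto

set_option synthInstance.maxHeartbeats 400000 in
set_option synthInstance.maxSize 2000 in
set_option maxRecDepth 10000 in
lemma line_of_slices_gen_three :
    ∀ x ∈ slices (genA 3) (genB 3), ∀ y ∈ slices (genA 3) (genB 3), x ≠ 1 →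
      x * y ∈ slices (genA 3) (genB 3) → x * y⁻¹ ∈ slices (genA 3) (genB 3) →
      y = 1 ∨ y = x ∨ y = x⁻¹ := by
  rintro ⟨x, x'⟩ hx ⟨y, y'⟩ hy
  obtain ⟨u, rfl⟩ := Multiplicative.ofAdd.surjective x
  obtain ⟨u', rfl⟩ := Multiplicative.ofAdd.surjective x'
  obtain ⟨v, rfl⟩ := Multiplicative.ofAdd.surjective y
  obtain ⟨v', rfl⟩ := Multiplicative.ofAdd.surjective y'
  simp only [Prod.inv_mk, Prod.mk_mul_mk, ← ofAdd_add, ← ofAdd_neg, mem_slices_gen, Ne,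
    Prod.mk_eq_one, ofAdd_eq_one, Prod.mk.injEq, EmbeddingLike.apply_eq_iff_eq] at hx hy ⊢
  revert u u' v v'
  decide

end Cyclic

/-! ### Adjoining the identity to a connection set -/

section Normalize

variable {G : Type*} [Group G]

lemma one_mem_iff_of_iso {S S' : Set G} (h : DigraphIso (cayleyRel S) (cayleyRel S')) :
    1 ∈ S ↔ 1 ∈ S' := by
  obtain ⟨e, he⟩ := h
  simpa [cayleyRel] using he 1 1

lemma iso_union_one {S S' : Set G} (h : DigraphIso (cayleyRel S) (cayleyRel S')) :
    DigraphIso (cayleyRel (S ∪ {1})) (cayleyRel (S' ∪ {1})) := by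
  obtain ⟨e, he⟩ := h
  refine ⟨e, fun x y => ?_⟩
  have := he x y
  simp only [cayleyRel] at this
  simp [cayleyRel, this, mul_inv_eq_one]

lemma ncard_eq_of_iso {S S' : Set G} (h : DigraphIso (cayleyRel S) (cayleyRel S')) :
    S.ncard = S'.ncard := by
  obtain ⟨e, he⟩ := h
  have : e.trans (Equiv.mulRight (e 1)⁻¹) '' S = S' := by
    ext y
    constructor
    · rintro ⟨x, hx, rfl⟩
      simpa [cayleyRel, hx] using he 1 x
    · intro hy
      refine ⟨e.symm (y * e 1), ?_, by simp⟩
      simpa [cayleyRel, hy] using he 1 (e.symm (y * e 1))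
  rw [← this, Set.ncard_image_of_injective _ (Equiv.injective _)]

lemma image_eq_of_image_union_one {S S' : Set G} (β : G ≃* G) (h1 : 1 ∈ S ↔ 1 ∈ S')
    (h : β '' (S ∪ {1}) = S' ∪ {1}) : β '' S = S' := by
  ext y
  by_cases hy : y = 1
  · subst hy
    simp [h1]
  · have := Set.ext_iff.1 h y
    simpa [Set.image_union, hy, Ne.symm hy] using this

end Normalize

/-- Theorem: if `Cay⃗(G;S)` is a non-DCI Cayley digraph of the finite group `G`,
`n ≥ 3`, `k = 2` if `n > 3` and `k = 3` if `n = 3`, `nk ≠ |G|`, either `n > 3` or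
`|S ∪ {1}| ≤ |G|/3`, and either `Cay⃗(G;S)` is not isomorphic to its reverse or some
automorphism of `G` carries `S` to `S⁻¹`, then `G × (ℤ_n)²` is not a CI group. -/
theorem mainThm {G : Type*} [Group G] [Finite G] (S : Set G)
    (hX : ¬ IsDCIDigraph S)
    (n : ℕ) (hn : 3 ≤ n) (k : ℕ) (hk : k = if 3 < n then 2 else 3)
    (hnk : n * k ≠ Nat.card G)
    (hsize : 3 < n ∨ 3 * (S ∪ {1} : Set G).ncard ≤ Nat.card G)
    (hrev : ¬ DigraphIso (cayleyRel S) (fun g h => cayleyRel S h g) ∨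
      ∃ α : G ≃* G, α '' S = S⁻¹) :
    ¬ IsCIGroup (G × Multiplicative (ZMod n) × Multiplicative (ZMod n)) := by
  intro hCI
  simp only [IsDCIDigraph, not_forall, not_exists] at hX
  obtain ⟨S', hiso, hno⟩ := hX
  have hone := one_mem_iff_of_iso hiso
  have hisoU := iso_union_one hiso
  have hcard := ncard_eq_of_iso hisoU
  have h1 : (1 : G) ∈ S ∪ {1} := by simp
  have h1' : (1 : G) ∈ S' ∪ {1} := by simp
  have h2 : 1 < (S ∪ {1}).ncard := by
    by_contra hle
    have e1 : S ∪ {1} = {1} := (Set.eq_of_subset_of_ncard_le (by simp)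
      (by rw [Set.ncard_singleton]; omega)).symm
    have e2 : S' ∪ {1} = {1} := (Set.eq_of_subset_of_ncard_le (by simp)
      (by rw [Set.ncard_singleton]; omega)).symm
    exact hno (MulEquiv.refl G) (image_eq_of_image_union_one _ hone (by simp [e1, e2]))
  obtain ⟨α, hα⟩ := hCI _ _ (liftSet_symm (genA n) (genB n) (S ∪ {1}))
    (liftSet_symm (genA n) (genB n) (S' ∪ {1})) (liftSet_iso _ _ hisoU)
  have hα' : ∀ p, α p ∈ liftSet (genA n) (genB n) (S' ∪ {1}) ↔
      p ∈ liftSet (genA n) (genB n) (S ∪ {1}) := fun p => by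
    rw [← hα]
    exact α.injective.mem_set_image
  have hab := goodPair_gen hn
  have hfib : ∀ g : G, (α (g, 1)).2 = 1 := by
    by_cases hn3 : 3 < n
    · exact snd_eq_one_of_sq (sq_notMem_slices_gen hn3) α hα'
    · obtain rfl : n = 3 := by omega
      have h3 := hsize.resolve_left hn3
      rw [hcard] at h3
      exact snd_eq_one_of_three hab h1' (hcard ▸ h2) h3 line_of_slices_gen_three α hα'
  obtain ⟨β, hβ | hβ⟩ := image_of_fiber hab h1 h1' hcard h2 α hα' hfib
  · exact hno β (image_eq_of_image_union_one _ hone hβ)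
  have hβS : β '' S = S'⁻¹ :=
    image_eq_of_image_union_one β (by simpa using hone) (by rw [hβ]; ext; simp)
  have hmem : ∀ x, β x ∈ S'⁻¹ ↔ x ∈ S := fun x => by
    rw [← hβS]
    exact β.injective.mem_set_image
  rcases hrev with hrev | ⟨γ, hγ⟩
  · -- Composing `e` with the inverse of `β` identifies the digraph with its reverse.
    apply hrev
    obtain ⟨e, he⟩ := hiso
    refine ⟨e.trans β.symm.toEquiv, fun x y => (he x y).trans ?_⟩
    have := hmem (β.symm (e x) * (β.symm (e y))⁻¹)
    simp only [map_mul, map_inv, MulEquiv.apply_symm_apply, Set.mem_inv, mul_inv_rev,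
      inv_inv] at this
    exact this
  · refine hno (γ.trans β) ?_
    have : (γ.trans β : G ≃* G) '' S = β '' (γ '' S) := by
      rw [Set.image_image]; rfl
    rw [this, hγ]
    ext y
    obtain ⟨x, rfl⟩ := β.surjective y
    rw [β.injective.mem_set_image, Set.mem_inv, ← hmem, map_inv, Set.mem_inv, inv_inv]
end

section
/- With the construction in the context (in particular 1_G ∈ S and S ≠ S⁻¹), suppose φ is a graph automorphism of X̂ such that: (1) φ(1_Ĝ) = 1_Ĝ; (2) φ maps each coset of G in Ĝ to a coset of G; and (3) φ maps each coset of AB in Ĝ to a coset of AB. Then the restriction of φ to G is either a digraph automorphism of X⃗, or a digraph isomorphism from X⃗ to X⃗⁻. -/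
/-!
Cosets of `G` in `Ĝ = G × A × B` are the fibres of the projection to `A × B`, and cosets of `AB`
are the fibres of the projection to `G`. A permutation `φ` respecting both families therefore has
product form `φ (g, x) = (ψ g, σ x)`, with `ψ 1 = 1` and `σ 1 = 1`.

Since `S ≠ S⁻¹` and `1 ∈ S`, there is `s ∈ S` with `s ≠ 1`. The edge from `1` to `(s, 1, b)` is
mapped to an edge from `1` to `(ψ s, σ (1, b))`, where `ψ s ≠ 1` and `σ (1, b) ≠ 1`; an edge which
changes both the `G`-coset and the `AB`-coset can only come from `Sb` or its inverse, so
`σ (1, b) = (1, b)` or `σ (1, b) = (1, b⁻¹)`. Because `b ≠ b⁻¹`, the edges of `X̂` between `G` and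
`Gb` encode exactly the relation `h * g⁻¹ ∈ S`, and those between `G` and `Gb⁻¹` the relation
`h * g⁻¹ ∈ S⁻¹`. In the two cases `ψ` is thus an automorphism of `X⃗`, respectively an isomorphism
to its reverse.
-/

open scoped Pointwise

section Construction

variable {G A B : Type*} [Group G] [Group A] [Group B]

/-- The subgroup `G` of `Ĝ = G × A × B` (as a subset). -/
def Gset (G A B : Type*) [Group G] [Group A] [Group B] : Set (G × A × B) :=
  {z | z.2.1 = 1 ∧ z.2.2 = 1}

/-- The subgroup `A` of `Ĝ = G × A × B` (as a subset). -/
def Aset (G A B : Type*) [Group G] [Group A] [Group B] : Set (G × A × B) :=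
  {z | z.1 = 1 ∧ z.2.2 = 1}

/-- The coset `Ab` in `Ĝ = G × A × B` (as a subset). -/
def Abset (G A : Type*) {B : Type*} [Group G] [Group A] [Group B] (b : B) :
    Set (G × A × B) :=
  {z | z.1 = 1 ∧ z.2.2 = b}

/-- The coset `Gb` in `Ĝ = G × A × B` (as a subset). -/
def Gbset (G A : Type*) {B : Type*} [Group G] [Group A] [Group B] (b : B) :
    Set (G × A × B) :=
  {z | z.2.1 = 1 ∧ z.2.2 = b}

/-- The coset `Sb` in `Ĝ = G × A × B` (as a subset), for `S ⊆ G`. -/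
def Sbset (A : Type*) {G B : Type*} [Group G] [Group A] [Group B]
    (S : Set G) (b : B) : Set (G × A × B) :=
  {z | z.1 ∈ S ∧ z.2.1 = 1 ∧ z.2.2 = b}

/-- The subgroup `AB` of `Ĝ = G × A × B` (as a subset). -/
def ABset (G A B : Type*) [Group G] [Group A] [Group B] : Set (G × A × B) :=
  {z | z.1 = 1}

/-- The subgroup `GB` of `Ĝ = G × A × B` (as a subset). -/
def GBset (G A B : Type*) [Group G] [Group A] [Group B] : Set (G × A × B) :=
  {z | z.2.1 = 1}

/-- The connection set `Ŝ = G ∪ Sb ∪ A ∪ Ab` of `Ĝ = G × A × B`. -/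
def Shat {G A B : Type*} [Group G] [Group A] [Group B] (S : Set G) (b : B) :
    Set (G × A × B) :=
  Gset G A B ∪ Sbset A S b ∪ Aset G A B ∪ Abset G A b

/-- The (symmetric) adjacency relation of the Cayley graph
`X̂ = Cay(Ĝ; Ŝ ∪ Ŝ⁻¹)`, where `Ĝ = G × A × B`. -/
def hatAdj {G A B : Type*} [Group G] [Group A] [Group B] (S : Set G) (b : B) :
    G × A × B → G × A × B → Prop :=
  fun x y => y * x⁻¹ ∈ Shat S b ∪ (Shat S b)⁻¹

end Construction

/-- A clique of a graph: a set of pairwise adjacent vertices. -/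
def IsClique {V : Type*} (adj : V → V → Prop) (C : Set V) : Prop :=
  ∀ x ∈ C, ∀ y ∈ C, x ≠ y → adj x y

/-- A maximal clique of a graph: a clique not properly contained in any clique. -/
def IsMaxClique {V : Type*} (adj : V → V → Prop) (C : Set V) : Prop :=
  IsClique adj C ∧ ∀ D : Set V, IsClique adj D → C ⊆ D → D = C

section

variable {G A B : Type*} [Group G] [Group A] [Group B]

theorem mem_Gset_mul (x z : G × A × B) : z ∈ Gset G A B * {x} ↔ z.2 = x.2 := by
  simp [Gset, Set.mul_singleton, mul_inv_eq_one, Prod.ext_iff]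

theorem mem_ABset_mul (x z : G × A × B) : z ∈ ABset G A B * {x} ↔ z.1 = x.1 := by
  simp [ABset, Set.mul_singleton, mul_inv_eq_one]

/-- Edges of `X̂` from `G` to `Gb` are the directed edges of `X⃗`; the identity elements of `A` and
`Ab` add nothing because `1 ∈ S`, and `b` must be distinct from `1` and `b⁻¹`. -/
theorem hatAdj_b {S : Set G} (hS1 : (1 : G) ∈ S) {b : B} (hb1 : b ≠ 1) (hb2 : b ≠ b⁻¹) (g h : G) :
    hatAdj (A := A) S b (g, 1, 1) (h, 1, b) ↔ cayleyRel S g h := by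
  have hb3 : b⁻¹ ≠ b := hb2.symm
  simp only [hatAdj, cayleyRel, Shat, Gset, Sbset, Aset, Abset, Set.mem_union, Set.mem_inv,
    Set.mem_ofPred_eq, Prod.fst_mul, Prod.snd_mul, Prod.fst_inv, Prod.snd_inv, inv_one, mul_one,
    hb1, hb3, inv_eq_one, and_false, or_false, and_true, false_or]
  constructor
  · rintro (h | h)
    · exact h
    · rw [h]; exact hS1
  · exact Or.inl

theorem hatAdj_symm {S : Set G} {b : B} {x y : G × A × B} :
    hatAdj S b x y ↔ hatAdj S b y x := by
  have h : x * y⁻¹ = (y * x⁻¹)⁻¹ := by group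
  simp only [hatAdj, h, Set.mem_union, Set.mem_inv, inv_inv]
  exact or_comm

/-- `X̂` is invariant under right translation. -/
theorem hatAdj_mul_right {S : Set G} {b : B} (x y z : G × A × B) :
    hatAdj S b (x * z) (y * z) ↔ hatAdj S b x y := by
  have h : y * z * (x * z)⁻¹ = y * x⁻¹ := by group
  simp only [hatAdj, h]

/-- Edges of `X̂` from `G` to `Gb⁻¹` are the reversed directed edges of `X⃗`. -/
theorem hatAdj_b_inv {S : Set G} (hS1 : (1 : G) ∈ S) {b : B} (hb1 : b ≠ 1) (hb2 : b ≠ b⁻¹)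
    (g h : G) : hatAdj (A := A) S b (g, 1, 1) (h, 1, b⁻¹) ↔ cayleyRel S h g := by
  rw [← hatAdj_b (A := A) hS1 hb1 hb2, ← hatAdj_mul_right _ _ (1, 1, b), hatAdj_symm]
  simp

/-- A neighbour of `1` outside `G` and outside `AB` lies in `Gb` or in `Gb⁻¹`. -/
theorem snd_of_hatAdj_one {S : Set G} {b : B} {z : G × A × B} (h : hatAdj S b 1 z)
    (hz1 : z.1 ≠ 1) (hz2 : z.2 ≠ 1) : z.2 = (1, b) ∨ z.2 = (1, b⁻¹) := by
  obtain ⟨g, a, c⟩ := z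
  simp only [ne_eq, Prod.mk_eq_one] at hz1 hz2
  simp only [hatAdj, Shat, Gset, Sbset, Aset, Abset, Set.mem_union, Set.mem_inv, inv_one, mul_one,
    Set.mem_ofPred_eq, Prod.fst_inv, Prod.snd_inv, hz1, hz2, false_and, or_false,
    false_or, inv_eq_iff_eq_inv] at h
  simp only [Prod.mk.injEq]
  tauto

end

/-- If `φ` is an automorphism of `X̂` fixing `1`, mapping cosets of `G` to cosets of
`G`, and cosets of `AB` to cosets of `AB`, then the restriction of `φ` to `G` is
either an automorphism of `X⃗ = Cay⃗(G;S)` or an isomorphism from `X⃗` to `X⃗⁻`. -/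
theorem restriction_is_iso {G A B : Type*} [Group G] [Group A] [Group B] [Finite G]
    (S : Set G) (hS1 : (1 : G) ∈ S) (hSsym : S ≠ S⁻¹)
    (n : ℕ) (hn : 3 ≤ n) (hA : Nat.card A = n)
    (b : B) (hb : orderOf b = n) (hBgen : ∀ y : B, y ∈ Subgroup.zpowers b)
    (φ : (G × A × B) ≃ (G × A × B))
    (hφ : ∀ x y, hatAdj S b x y ↔ hatAdj S b (φ x) (φ y))
    (h1 : φ 1 = 1)
    (hG : ∀ x : G × A × B, ∃ y : G × A × B, φ '' (Gset G A B * {x}) = Gset G A B * {y})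
    (hAB : ∀ x : G × A × B, ∃ y : G × A × B, φ '' (ABset G A B * {x}) = ABset G A B * {y}) :
    ∃ ψ : G ≃ G, (∀ g : G, φ (g, 1, 1) = (ψ g, 1, 1)) ∧
      ((∀ g h : G, cayleyRel S g h ↔ cayleyRel S (ψ g) (ψ h)) ∨
       (∀ g h : G, cayleyRel S g h ↔ cayleyRel S (ψ h) (ψ g))) := by
  have hb1 : b ≠ 1 := by
    rintro rfl
    rw [orderOf_one] at hb
    omega
  have hb2 : b ≠ b⁻¹ := by
    intro h
    have h2 : b ^ 2 = 1 := by
      rw [pow_two]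
      exact mul_eq_one_iff_eq_inv.mpr h
    have := Nat.le_of_dvd two_pos (orderOf_dvd_of_pow_eq_one h2)
    omega
  have hsnd : ∀ x y : G × A × B, x.2 = y.2 → (φ x).2 = (φ y).2 := by
    intro x y hxy
    obtain ⟨z, hz⟩ := hG y
    have key : ∀ w : G × A × B, w.2 = y.2 → (φ w).2 = z.2 := fun w hw =>
      (mem_Gset_mul z _).mp (hz ▸ Set.mem_image_of_mem φ ((mem_Gset_mul y w).mpr hw))
    rw [key x hxy, key y rfl]
  have hfst : ∀ x y : G × A × B, x.1 = y.1 → (φ x).1 = (φ y).1 := by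
    intro x y hxy
    obtain ⟨z, hz⟩ := hAB y
    have key : ∀ w : G × A × B, w.1 = y.1 → (φ w).1 = z.1 := fun w hw =>
      (mem_ABset_mul z _).mp (hz ▸ Set.mem_image_of_mem φ ((mem_ABset_mul y w).mpr hw))
    rw [key x hxy, key y rfl]
  have hψ : ∀ g : G, φ (g, 1, 1) = ((φ (g, 1, 1)).1, 1, 1) := fun g =>
    Prod.ext rfl ((hsnd (g, 1, 1) 1 rfl).trans (by rw [h1]; rfl))
  have hinj : Function.Injective fun g : G => (φ (g, 1, 1)).1 := by
    intro g h hgh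
    have hgh' : φ (g, 1, 1) = φ (h, 1, 1) := by
      rw [hψ g, hψ h]
      exact Prod.ext hgh rfl
    exact congrArg Prod.fst (φ.injective hgh')
  let ψ : G ≃ G := Equiv.ofBijective _ (Finite.injective_iff_bijective.mp hinj)
  have hψ' : ∀ g : G, φ (g, 1, 1) = (ψ g, 1, 1) := hψ
  have hψ1 : ψ 1 = 1 := congrArg Prod.fst h1
  have hφb : ∀ g : G, φ (g, 1, b) = (ψ g, (φ (1, 1, b)).2) := fun g =>
    Prod.ext (hfst (g, 1, b) (g, 1, 1) rfl) (hsnd (g, 1, b) (1, 1, b) rfl)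
  obtain ⟨s, hs, hs1⟩ : ∃ s ∈ S, s ≠ 1 := by
    by_contra! hcon
    have hS : S = {1} := Set.eq_singleton_iff_unique_mem.mpr ⟨hS1, hcon⟩
    exact hSsym (by rw [hS, Set.inv_singleton, inv_one])
  have hne : (φ (1, 1, b)).2 ≠ 1 := by
    intro h
    have h' : φ (1, 1, b) = φ 1 := by
      rw [hφb, h, hψ1, h1]
      rfl
    exact hb1 (congrArg (fun z : G × A × B => z.2.2) (φ.injective h'))
  have hedge : hatAdj S b 1 (ψ s, (φ (1, 1, b)).2) := by
    rw [← hφb, ← h1, ← hφ]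
    exact (hatAdj_b hS1 hb1 hb2 1 s).mpr (by simpa [cayleyRel] using hs)
  have hcases := snd_of_hatAdj_one hedge
    (fun h => hs1 (ψ.injective (h.trans hψ1.symm))) hne
  have hrel : ∀ g h : G, cayleyRel S g h ↔
      hatAdj S b (ψ g, (1 : A), (1 : B)) (ψ h, (φ (1, 1, b)).2) := fun g h => by
    rw [← hatAdj_b (A := A) hS1 hb1 hb2, hφ, hψ', hφb]
  refine ⟨ψ, hψ', hcases.imp (fun hc g h => ?_) (fun hc g h => ?_)⟩
  · rw [hrel, show (φ (1, 1, b)).2 = (1, b) from hc, hatAdj_b hS1 hb1 hb2]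
  · rw [hrel, show (φ (1, 1, b)).2 = (1, b⁻¹) from hc, hatAdj_b_inv hS1 hb1 hb2]
end

section
/- With the construction in the context (in particular 1_G ∈ S and S ≠ S⁻¹), assume n = 3. Then every maximal clique of the graph X̂ is, for some x ∈ Ĝ, one of the following sets of vertices: (a) the coset Gx; (b') the coset ABx; or (c') a subset of the coset GBx that does not contain any coset of G. -/
/-!
For `n = 3` one has `B = {1, b, b⁻¹}`, so the part `A ∪ Ab ∪ (Ab)⁻¹` of the connection set is all
of `AB`. Hence two vertices with the same `G`-coordinate are always adjacent, and adjacent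
vertices share their `G`-coordinate or their `A`-coordinate (`hatAdj_iff`). A set in which any two
points agree in one of two coordinates is constant in one of them
(`constant_coord_of_pairwise`), so a clique lies in a coset of `AB` or of `GB`. A coset of `AB` is
itself a clique, so in the first case a maximal clique equals it. In the second case, a vertex of
`GBx` outside `Gy` adjacent to all of `Gy` would force `S = G` (`eq_univ_of_adj_coset`),
contradicting `S ≠ S⁻¹`; so a clique in `GBx` containing a coset of `G` equals that coset.
-/

open scoped Pointwise

theorem mem_Gset_mul_singleton {G A B : Type*} [Group G] [Group A] [Group B]
    (x z : G × A × B) : z ∈ Gset G A B * {x} ↔ z.2 = x.2 := by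
  simp [Set.mul_singleton, Gset, Prod.ext_iff, mul_inv_eq_one]

theorem mem_ABset_mul_singleton {G A B : Type*} [Group G] [Group A] [Group B]
    (x z : G × A × B) : z ∈ ABset G A B * {x} ↔ z.1 = x.1 := by
  simp [Set.mul_singleton, ABset, mul_inv_eq_one]

theorem mem_GBset_mul_singleton {G A B : Type*} [Group G] [Group A] [Group B]
    (x z : G × A × B) : z ∈ GBset G A B * {x} ↔ z.2.1 = x.2.1 := by
  simp [Set.mul_singleton, GBset, mul_inv_eq_one]

theorem eq_one_or_gen_or_inv {B : Type*} [Group B] {b : B} (hb : orderOf b = 3)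
    (hBgen : ∀ y : B, y ∈ Subgroup.zpowers b) (c : B) : c = 1 ∨ c = b ∨ c = b⁻¹ := by
  have hb3 : b ^ 3 = 1 := hb ▸ pow_orderOf_eq_one b
  have hfin : IsOfFinOrder b := orderOf_pos_iff.mp (by omega)
  obtain ⟨k, hk, rfl⟩ : ∃ k < 3, b ^ k = c := by
    classical
    simpa [hb] using hfin.mem_zpowers_iff_mem_range_orderOf.mp (hBgen c)
  interval_cases k
  · simp
  · simp
  · right; right
    exact eq_inv_of_mul_eq_one_left (by rw [← pow_succ, hb3])

/-- Adjacency in coordinates: the full subgroup `AB` belongs to the connection set, and the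
remaining adjacencies take place inside cosets of `GB`. -/
theorem hatAdj_iff {G A B : Type*} [Group G] [Group A] [Group B] {b : B} (hb : orderOf b = 3)
    (hBgen : ∀ y : B, y ∈ Subgroup.zpowers b) (S : Set G) (x y : G × A × B) :
    hatAdj S b x y ↔ x.1 = y.1 ∨ (x.2.1 = y.2.1 ∧ (x.2.2 = y.2.2 ∨
      (y.1 * x.1⁻¹ ∈ S ∧ y.2.2 * x.2.2⁻¹ = b) ∨ (x.1 * y.1⁻¹ ∈ S ∧ x.2.2 * y.2.2⁻¹ = b))) := by
  have h := eq_one_or_gen_or_inv hb hBgen (y.2.2 * x.2.2⁻¹)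
  have hinv : y.2.2 * x.2.2⁻¹ = b⁻¹ ↔ x.2.2 * y.2.2⁻¹ = b := by
    rw [← inv_inj, mul_inv_rev, inv_inv, inv_inv]
  have e1 : y.1 * x.1⁻¹ = 1 ↔ x.1 = y.1 := by rw [mul_inv_eq_one, eq_comm]
  have e2 : y.2.1 * x.2.1⁻¹ = 1 ↔ x.2.1 = y.2.1 := by rw [mul_inv_eq_one, eq_comm]
  have e3 : y.2.2 * x.2.2⁻¹ = 1 ↔ x.2.2 = y.2.2 := by rw [mul_inv_eq_one, eq_comm]
  have f1 : x.1 * y.1⁻¹ = 1 ↔ x.1 = y.1 := mul_inv_eq_one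
  have f2 : x.2.1 * y.2.1⁻¹ = 1 ↔ x.2.1 = y.2.1 := mul_inv_eq_one
  have f3 : x.2.2 * y.2.2⁻¹ = 1 ↔ x.2.2 = y.2.2 := mul_inv_eq_one
  rw [e3, hinv] at h
  simp only [hatAdj, Shat, Gset, Sbset, Aset, Abset, Set.mem_union, Set.mem_inv, Set.mem_ofPred_eq,
    Prod.fst_mul, Prod.snd_mul, Prod.fst_inv, Prod.snd_inv, mul_inv_rev, inv_inv,
    e1, e2, e3, f1, f2, f3]
  clear e1 e2 e3 f1 f2 f3 hinv
  grind

/-- If any two points of a set agree under `f` or under `g`, then one of `f`, `g` is constant on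
the set. -/
theorem constant_coord_of_pairwise {V X Y : Type*} (f : V → X) (g : V → Y) (C : Set V)
    (h : ∀ x ∈ C, ∀ y ∈ C, f x = f y ∨ g x = g y) :
    (∀ x ∈ C, ∀ y ∈ C, f x = f y) ∨ (∀ x ∈ C, ∀ y ∈ C, g x = g y) := by
  by_contra! hne
  obtain ⟨⟨x, hx, y, hy, hxy⟩, u, hu, v, hv, huv⟩ := hne
  grind

/-- A vertex whose `B`-coordinate differs from that of `y`, adjacent to every vertex of `Gy`, forces
`S = G`. The difference `1` in the `G`-coordinate, where adjacency comes from `AB` and gives no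
information on `S`, is covered by `1 ∈ S`. -/
theorem eq_univ_of_adj_coset {G A B : Type*} [Group G] [Group A] [Group B] {b : B}
    (hb : orderOf b = 3) (hBgen : ∀ y : B, y ∈ Subgroup.zpowers b) {S : Set G}
    (hS1 : (1 : G) ∈ S) (y z : G × A × B) (hB : z.2.2 ≠ y.2.2)
    (hadj : ∀ g : G, hatAdj S b (g, y.2) z) : S = Set.univ := by
  have key := fun g => (hatAdj_iff hb hBgen S (g, y.2) z).mp (hadj g)
  have hne : b ≠ b⁻¹ := by
    intro h
    have h2 : b ^ 2 = 1 := by rw [pow_two]; exact mul_eq_one_iff_eq_inv.mpr h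
    have := orderOf_dvd_of_pow_eq_one h2
    rw [hb] at this
    omega
  ext t
  simp only [Set.mem_univ, iff_true]
  -- The `B`-coordinate of `z * y⁻¹` is `b` or `b⁻¹`; this decides whether all of `G` appears
  -- as `z.1 * g⁻¹` or as `g * z.1⁻¹`.
  rcases eq_one_or_gen_or_inv hb hBgen (z.2.2 * y.2.2⁻¹) with h | h | h
  · exact absurd (mul_inv_eq_one.mp h) hB
  · have h' : y.2.2 * z.2.2⁻¹ ≠ b := by
      intro h'
      apply hne
      rw [← h, mul_inv_rev, inv_inv, h', h]
    rcases key (t⁻¹ * z.1) with k | ⟨-, k | k | k⟩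
    · have : t = 1 := by simpa using k
      exact this ▸ hS1
    · exact absurd k.symm hB
    · simpa using k.1
    · exact absurd k.2 h'
  · have h' : z.2.2 * y.2.2⁻¹ ≠ b := fun h' => hne (h'.symm.trans h)
    rcases key (t * z.1) with k | ⟨-, k | k | k⟩
    · have : t = 1 := by simpa using k
      exact this ▸ hS1
    · exact absurd k.symm hB
    · exact absurd k.2 h'
    · simpa using k.1

/-- For `n = 3`, every maximal clique of `X̂` is, for some `x ∈ Ĝ`: (a) a coset
`Gx`; (b') a coset `ABx`; or (c') a subset of `GBx` containing no coset of `G`. -/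
theorem maximal_cliques_n_eq_3 {G A B : Type*} [Group G] [Group A] [Group B] [Finite G]
    (S : Set G) (hS1 : (1 : G) ∈ S) (hSsym : S ≠ S⁻¹)
    (hA : Nat.card A = 3)
    (b : B) (hb : orderOf b = 3) (hBgen : ∀ y : B, y ∈ Subgroup.zpowers b)
    (C : Set (G × A × B)) (hC : IsMaxClique (hatAdj S b) C) :
    ∃ x : G × A × B,
      C = Gset G A B * {x} ∨
      C = ABset G A B * {x} ∨
      (C ⊆ GBset G A B * {x} ∧
        ∀ y : G × A × B, ¬ (Gset G A B * {y} ⊆ C)) := by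
  obtain ⟨hcl, hmax⟩ := hC
  have hpair : ∀ x ∈ C, ∀ y ∈ C, x.1 = y.1 ∨ x.2.1 = y.2.1 := by
    intro x hx y hy
    by_cases hxy : x = y
    · exact Or.inl (congrArg _ hxy)
    · exact ((hatAdj_iff hb hBgen S x y).mp (hcl x hx y hy hxy)).imp_right And.left
  rcases C.eq_empty_or_nonempty with rfl | ⟨x, hx⟩
  · refine ⟨1, Or.inr (Or.inr ⟨Set.empty_subset _, fun y hy => ?_⟩)⟩
    exact hy ((mem_Gset_mul_singleton y y).mpr rfl)
  rcases constant_coord_of_pairwise (fun z : G × A × B => z.1) (fun z => z.2.1) C hpair with h | h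
  · refine ⟨x, Or.inr (Or.inl (hmax _ ?_ ?_).symm)⟩
    · intro u hu v hv _
      rw [mem_ABset_mul_singleton] at hu hv
      exact (hatAdj_iff hb hBgen S u v).mpr (Or.inl (hu.trans hv.symm))
    · intro z hz
      exact (mem_ABset_mul_singleton x z).mpr (h z hz x hx)
  · by_cases hy : ∃ y : G × A × B, Gset G A B * {y} ⊆ C
    · obtain ⟨y, hy⟩ := hy
      refine ⟨y, Or.inl (Set.Subset.antisymm (fun z hz => ?_) hy)⟩
      have hmem : ∀ g : G, (g, y.2) ∈ C := fun g =>
        hy ((mem_Gset_mul_singleton y (g, y.2)).mpr rfl)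
      have hA' : z.2.1 = y.2.1 := h z hz (1, y.2) (hmem 1)
      rw [mem_Gset_mul_singleton]
      by_contra hzy
      have hB : z.2.2 ≠ y.2.2 := fun hB => hzy (Prod.ext hA' hB)
      have hS : S = Set.univ := eq_univ_of_adj_coset hb hBgen hS1 y z hB fun g =>
        hcl _ (hmem g) z hz (fun e => hzy (e ▸ rfl))
      exact hSsym (by rw [hS, Set.inv_univ])
    · refine ⟨x, Or.inr (Or.inr ⟨fun z hz => ?_, not_exists.mp hy⟩)⟩
      exact (mem_GBset_mul_singleton x z).mpr (h z hz x hx)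
end

section
/- With the construction in the context (in particular 1_G ∈ S and S ≠ S⁻¹), assume n > 3. Then for every x ∈ Ĝ the set Ax ∪ Abx is a maximal clique of the graph X̂. -/
/-!
Right translations are automorphisms of the Cayley graph `X̂`, so everything reduces to the connection
set `Ŝ ∪ Ŝ⁻¹`. It contains the whole of `A`, `Ab` and `Ab⁻¹`, and these are exactly the values of
`c' * c⁻¹` for `c, c' ∈ A ∪ Ab`; hence `Ax ∪ Abx` is a clique.

For maximality, let `(g, a, β) * x` lie in a clique containing `Ax ∪ Abx` and suppose that
`(g, a, β) ∉ A ∪ Ab`. Choose `a' ≠ a` in `A`. The differences between `(g, a, β)` and the points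
`(1, a', 1)`, `(1, a', b)` have nontrivial `A`-component, and such elements of `Ŝ ∪ Ŝ⁻¹` have trivial
`G`-component and `B`-component in `{1, b, b⁻¹}` (`of_mem_of_snd_ne_one`). So `g = 1`, then
`β = b⁻¹` since `β ∉ {1, b}`, and finally `b ^ 2 ∈ {1, b, b⁻¹}`, which is impossible because `b` has
order greater than `3`.
-/

open scoped Pointwise

/-- Off the subgroup `GB`, only the parts `A`, `Ab` and `Ab⁻¹` of the connection set remain. -/
theorem of_mem_of_snd_ne_one {G A B : Type*} [Group G] [Group A] [Group B]
    {S : Set G} {b : B} {z : G × A × B} (hz : z ∈ Shat S b ∪ (Shat S b)⁻¹) (ha : z.2.1 ≠ 1) :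
    z.1 = 1 ∧ (z.2.2 = 1 ∨ z.2.2 = b ∨ z.2.2 = b⁻¹) := by
  simp only [Shat, Gset, Sbset, Aset, Abset, Set.mem_union, Set.mem_inv, Set.mem_ofPred_eq,
    Prod.fst_inv, Prod.snd_inv, inv_eq_one, inv_eq_iff_eq_inv (b := b)] at hz
  tauto

theorem mem_of_fst_eq_one {G A B : Type*} [Group G] [Group A] [Group B]
    {S : Set G} {b : B} {z : G × A × B} (h1 : z.1 = 1)
    (h2 : z.2.2 = 1 ∨ z.2.2 = b ∨ z.2.2 = b⁻¹) : z ∈ Shat S b ∪ (Shat S b)⁻¹ := by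
  simp only [Shat, Gset, Sbset, Aset, Abset, Set.mem_union, Set.mem_inv, Set.mem_ofPred_eq,
    Prod.fst_inv, Prod.snd_inv, inv_eq_one, inv_eq_iff_eq_inv (b := b)]
  tauto

/-- For `n > 3`, every set `Ax ∪ Abx` is a maximal clique of `X̂`. -/
theorem AunionAb_is_maximal_clique {G A B : Type*} [Group G] [Group A] [Group B] [Finite G]
    (S : Set G) (hS1 : (1 : G) ∈ S) (hSsym : S ≠ S⁻¹)
    (n : ℕ) (hn : 3 < n) (hA : Nat.card A = n)
    (b : B) (hb : orderOf b = n) (hBgen : ∀ y : B, y ∈ Subgroup.zpowers b)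
    (x : G × A × B) :
    IsMaxClique (hatAdj S b) ((Aset G A B ∪ Abset G A b) * {x}) := by
  have hfin : Finite A := Nat.finite_of_card_ne_zero (by omega)
  have hnt : Nontrivial A := Finite.one_lt_card_iff_nontrivial.mp (by omega)
  refine ⟨?_, fun D hD hCD => Set.Subset.antisymm ?_ hCD⟩
  · intro u hu v hv _
    rw [Set.mul_singleton] at hu hv
    obtain ⟨c, hc, rfl⟩ := hu
    obtain ⟨c', hc', rfl⟩ := hv
    have hcc : c' * x * (c * x)⁻¹ = c' * c⁻¹ := by group
    change c' * x * (c * x)⁻¹ ∈ _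
    rw [hcc]
    rcases hc with ⟨h1, h2⟩ | ⟨h1, h2⟩ <;> rcases hc' with ⟨h1', h2'⟩ | ⟨h1', h2'⟩ <;>
      exact mem_of_fst_eq_one (by simp [h1, h1']) (by simp [h2, h2'])
  · intro d hd
    obtain ⟨⟨g, a, β⟩, rfl⟩ : ∃ z, d = z * x := ⟨d * x⁻¹, by group⟩
    by_contra hnot
    have hz : (g, a, β) ∉ Aset G A B ∪ Abset G A b := fun h =>
      hnot (Set.mul_mem_mul h rfl)
    obtain ⟨a', ha'⟩ := exists_ne a
    have key : ∀ γ : B, γ = 1 ∨ γ = b →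
        g = 1 ∧ (γ * β⁻¹ = 1 ∨ γ * β⁻¹ = b ∨ γ * β⁻¹ = b⁻¹) := by
      intro γ hγ
      have hc : ((1 : G), a', γ) ∈ Aset G A B ∪ Abset G A b := by
        rcases hγ with h | h
        · exact Or.inl ⟨rfl, h⟩
        · exact Or.inr ⟨rfl, h⟩
      have hadj := hD _ hd _ (hCD (Set.mul_mem_mul hc rfl)) (fun h => ha' (by
        have h' := mul_right_cancel h
        simp only [Prod.mk.injEq] at h'
        exact h'.2.1.symm))
      have he : ((1 : G), a', γ) * x * ((g, a, β) * x)⁻¹ = (g⁻¹, a' * a⁻¹, γ * β⁻¹) := by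
        rw [mul_inv_rev, mul_assoc, mul_inv_cancel_left]
        simp
      rw [hatAdj, he] at hadj
      simpa using of_mem_of_snd_ne_one hadj (by simpa [mul_inv_eq_one] using ha')
    obtain ⟨hg, h1⟩ := key 1 (Or.inl rfl)
    have hβ1 : β ≠ 1 := fun h => hz (Or.inl ⟨hg, h⟩)
    have hβb : β ≠ b := fun h => hz (Or.inr ⟨hg, h⟩)
    have hβ : β = b⁻¹ := by
      simp only [one_mul, inv_eq_one, inv_inj, hβ1, hβb, false_or, or_false] at h1
      exact inv_eq_iff_eq_inv.mp h1
    have hpow : ∀ k, 0 < k → k < 4 → b ^ k ≠ 1 := fun k hk hk4 h => by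
      have := orderOf_le_of_pow_eq_one hk h
      omega
    have h2 := (key b (Or.inr rfl)).2
    rw [hβ, inv_inv] at h2
    rcases h2 with h | h | h
    · exact hpow 2 (by norm_num) (by norm_num) (by rw [pow_two, h])
    · exact hpow 1 (by norm_num) (by norm_num) (by simpa using h)
    · exact hpow 3 (by norm_num) (by norm_num) (by rw [pow_succ, pow_two, h, inv_mul_cancel])
end

section
/- With the construction in the context (in particular 1_G ∈ S and S ≠ S⁻¹), let π be a digraph automorphism of X⃗ = Cay⃗(G;S), and let a ∈ A and c ∈ B. Then the permutation of Ĝ = G × A × B given by (g, x, y) ↦ (π(g), xa, yc) is a graph automorphism of X̂. In particular, Aut(X⃗) × A_R × B_R is a subgroup of Aut(X̂), where A_R and B_R denote the right regular representations of A and B. -/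
/-! Whether there is an arc `x → y` in `Cay⃗(Ĝ;Ŝ)` depends only on three pieces of data: equality of
coordinates, the relation `cayleyRel S` between the `G`-coordinates, and whether the `B`-coordinates
are related by left multiplication by `b` (`mul_inv_mem_Shat`). Each of these is preserved and
reflected by the product map, since `π` is a digraph automorphism and right translations commute
with left multiplication. Symmetrizing `Ŝ` gives the claim for `X̂`. -/

open scoped Pointwise

/-- The arcs of `Cay⃗(Ĝ;Ŝ)` in coordinates; the four cases are the four parts of `Ŝ`. -/
lemma mul_inv_mem_Shat {G A B : Type*} [Group G] [Group A] [Group B] (S : Set G) (b : B)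
    (x y : G × A × B) :
    y * x⁻¹ ∈ Shat S b ↔
      (y.2.1 = x.2.1 ∧ y.2.2 = x.2.2) ∨
      (cayleyRel S x.1 y.1 ∧ y.2.1 = x.2.1 ∧ y.2.2 = b * x.2.2) ∨
      (y.1 = x.1 ∧ y.2.2 = x.2.2) ∨
      (y.1 = x.1 ∧ y.2.2 = b * x.2.2) := by
  simp only [Shat, Gset, Sbset, Aset, Abset, cayleyRel, Set.mem_union, Set.mem_ofPred_eq,
    Prod.fst_mul, Prod.snd_mul, Prod.fst_inv, Prod.snd_inv, mul_inv_eq_iff_eq_mul, one_mul,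
    or_assoc]

lemma hatAdj_iff_s15 {G A B : Type*} [Group G] [Group A] [Group B] (S : Set G) (b : B)
    (x y : G × A × B) :
    hatAdj S b x y ↔ y * x⁻¹ ∈ Shat S b ∨ x * y⁻¹ ∈ Shat S b := by
  simp only [hatAdj, Set.mem_union, Set.mem_inv, mul_inv_rev, inv_inv]

/-- If `π` is a digraph automorphism of `X⃗ = Cay⃗(G;S)`, `a ∈ A` and `c ∈ B`,
then the permutation `(g, x, y) ↦ (π g, xa, yc)` of `Ĝ = G × A × B` is a graph
automorphism of `X̂`.  (Quantifying over all such `π`, `a`, `c`, this says that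
`Aut X⃗ × A_R × B_R` is a subgroup of `Aut X̂`.) -/
theorem product_automorphism {G A B : Type*} [Group G] [Group A] [Group B] [Finite G]
    (S : Set G) (hS1 : (1 : G) ∈ S) (hSsym : S ≠ S⁻¹)
    (n : ℕ) (hn : 3 ≤ n) (hA : Nat.card A = n)
    (b : B) (hb : orderOf b = n) (hBgen : ∀ y : B, y ∈ Subgroup.zpowers b)
    (π : Equiv.Perm G)
    (hπ : ∀ g h : G, cayleyRel S g h ↔ cayleyRel S (π g) (π h))
    (a : A) (c : B) :
    Function.Bijective (fun z : G × A × B => (π z.1, z.2.1 * a, z.2.2 * c)) ∧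
    ∀ x y : G × A × B,
      hatAdj S b x y ↔
        hatAdj S b (π x.1, x.2.1 * a, x.2.2 * c) (π y.1, y.2.1 * a, y.2.2 * c) := by
  refine ⟨?_, fun x y => ?_⟩
  · exact (π.prodCongr ((Equiv.mulRight a).prodCongr (Equiv.mulRight c))).bijective
  · simp only [hatAdj_iff_s15, mul_inv_mem_Shat, ← hπ, π.injective.eq_iff, ← mul_assoc,
      mul_left_inj]
end

section
/- With the construction in the context (in particular 1_G ∈ S and S ≠ S⁻¹), suppose φ is a graph automorphism of X̂ with φ(1_Ĝ) = 1_Ĝ that maps each coset of G in Ĝ to a coset of G. Then φ(G) = G, and there is ε ∈ {1, −1} such that φ(Gb) = Gb^ε. -/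
/-!
The cosets of `G` in `Ĝ = G × A × B` are the fibres of the projection to `A × B`, and `φ` permutes
them; since `φ 1 = 1`, it fixes the fibre `G` of `1`. In `X̂`, a vertex outside the coset `G` that
is adjacent to `1` lies in `A`, `Ab`, `Ab⁻¹` (where it is determined by its coset of `G`), or in
`Sb`, `S⁻¹b⁻¹`. So a coset other than `G` containing two neighbours of `1` is `Gb` or `Gb⁻¹`
(`snd_of_two_neighbours`). As `1 ∈ S` and `S ≠ S⁻¹`, there is `s ∈ S` with `s ≠ 1`, so the coset
`Gb` contains the two neighbours `b` and `sb` of `1`; hence so does `φ(Gb)`, which is therefore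
`Gb` or `Gb⁻¹`.
-/

open scoped Pointwise

/-- The coset `Gx` is the fibre through `x` of the projection to `A × B`. -/
theorem Gset_mul_singleton {G A B : Type*} [Group G] [Group A] [Group B] (x : G × A × B) :
    Gset G A B * {x} = {z | z.2 = x.2} := by
  ext z
  simp only [Set.mul_singleton, Set.mem_image, Gset, Set.mem_ofPred_eq]
  constructor
  · rintro ⟨⟨g, a, c⟩, ⟨ha, hc⟩, rfl⟩
    simp only at ha hc
    subst ha hc
    simp
  · intro h
    refine ⟨(z.1 * x.1⁻¹, 1, 1), ⟨rfl, rfl⟩, ?_⟩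
    ext <;> simp [h]

theorem of_hatAdj_one {G A B : Type*} [Group G] [Group A] [Group B] {S : Set G} {b : B}
    {z : G × A × B} (h : hatAdj S b 1 z) :
    (z.2.2 = 1 ∨ z.2.2 = b ∨ z.2.2 = b⁻¹) ∧ (z.2.1 = 1 ∨ z.1 = 1) := by
  simp only [hatAdj, Shat, Gset, Sbset, Aset, Abset, inv_one, mul_one, Set.mem_union, Set.mem_inv,
    Set.mem_ofPred_eq, Prod.fst_inv, Prod.snd_inv, inv_eq_iff_eq_inv] at h
  tauto

/-- A coset of `G` other than `G` itself that contains two neighbours of `1` is `Gb` or `Gb⁻¹`. -/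
theorem snd_of_two_neighbours {G A B : Type*} [Group G] [Group A] [Group B] {S : Set G} {b : B}
    {z w : G × A × B} (hz : hatAdj S b 1 z) (hw : hatAdj S b 1 w) (hzw : z ≠ w)
    (h2 : z.2 = w.2) (hne : z.2 ≠ 1) : z.2 = (1, b) ∨ z.2 = (1, b⁻¹) := by
  obtain ⟨hzB, hzA⟩ := of_hatAdj_one hz
  obtain ⟨-, hwA⟩ := of_hatAdj_one hw
  have ha : z.2.1 = 1 := by
    by_contra ha
    have hz1 := hzA.resolve_left ha
    have hw1 := hwA.resolve_left (h2 ▸ ha)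
    exact hzw (Prod.ext (hz1.trans hw1.symm) h2)
  rcases hzB with hB | hB | hB
  · exact absurd (Prod.ext ha hB) hne
  · exact Or.inl (Prod.ext ha hB)
  · exact Or.inr (Prod.ext ha hB)

/-- If `φ` is an automorphism of `X̂` with `φ(1) = 1` that maps each coset of `G`
to a coset of `G`, then `φ(G) = G`, and `φ(Gb) = Gbᵉ` for some `ε ∈ {1, -1}`. -/
theorem phi_fixes_G_and_eps {G A B : Type*} [Group G] [Group A] [Group B] [Finite G]
    (S : Set G) (hS1 : (1 : G) ∈ S) (hSsym : S ≠ S⁻¹)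
    (n : ℕ) (hn : 3 ≤ n) (hA : Nat.card A = n)
    (b : B) (hb : orderOf b = n) (hBgen : ∀ y : B, y ∈ Subgroup.zpowers b)
    (φ : (G × A × B) ≃ (G × A × B))
    (hφ : ∀ x y, hatAdj S b x y ↔ hatAdj S b (φ x) (φ y))
    (h1 : φ 1 = 1)
    (hG : ∀ x : G × A × B, ∃ y : G × A × B,
      φ '' (Gset G A B * {x}) = Gset G A B * {y}) :
    φ '' Gset G A B = Gset G A B ∧
    ∃ ε : ℤ, (ε = 1 ∨ ε = -1) ∧ φ '' Gbset G A b = Gbset G A (b ^ ε) := by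
  simp only [Gset_mul_singleton] at hG
  -- A coset maps onto the coset of the image of any of its points.
  have hfib : ∀ x, φ '' {z | z.2 = x.2} = {z | z.2 = (φ x).2} := by
    intro x
    obtain ⟨y, hy⟩ := hG x
    have hx : φ x ∈ {z : G × A × B | z.2 = y.2} := hy ▸ Set.mem_image_of_mem φ rfl
    rw [hy, show (φ x).2 = y.2 from hx]
  have hGset : Gset G A B = {z | z.2 = (1 : G × A × B).2} := by
    ext z; simp [Gset, Prod.ext_iff]
  have hGb : ∀ c : B, Gbset G A c = {z | z.2 = ((1, 1, c) : G × A × B).2} := by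
    intro c; ext z; simp [Gbset, Prod.ext_iff]
  have hφG : φ '' Gset G A B = Gset G A B := by rw [hGset, hfib, h1]
  refine ⟨hφG, ?_⟩
  have hb1 : b ≠ 1 := by
    rintro rfl
    rw [orderOf_one] at hb
    omega
  obtain ⟨s, hs, hs1⟩ : ∃ s ∈ S, s ≠ 1 := by
    by_contra! h
    exact hSsym (by rw [(Set.eq_singleton_iff_unique_mem.2 ⟨hS1, h⟩ : S = {1})]; simp)
  have hnb : ∀ t ∈ S, hatAdj S b 1 (φ ((t, 1, b) : G × A × B)) := by
    intro t ht
    have := (hφ 1 (t, 1, b)).1 (by simp [hatAdj, Shat, Sbset, ht])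
    rwa [h1] at this
  set p : G × A × B := (1, 1, b) with hp
  set q : G × A × B := (s, 1, b) with hq
  have hpq : φ p ≠ φ q := fun h => hs1 (congrArg Prod.fst (φ.injective h)).symm
  have h2 : (φ p).2 = (φ q).2 := by
    have : φ q ∈ φ '' {z | z.2 = p.2} := Set.mem_image_of_mem φ rfl
    rw [hfib] at this
    exact this.symm
  have hne : (φ p).2 ≠ 1 := by
    intro h
    have hmem : φ p ∈ φ '' Gset G A B := by
      rw [hφG, hGset]; exact h
    exact hb1 ((φ.injective.mem_set_image.1 hmem).2)
  rcases snd_of_two_neighbours (hnb 1 hS1) (hnb s hs) hpq h2 hne with h | h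
  · exact ⟨1, Or.inl rfl, by rw [hGb, hfib, zpow_one, hGb, h]⟩
  · exact ⟨-1, Or.inr rfl, by rw [hGb, hfib, zpow_neg_one, hGb, h]⟩
end
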